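/- arXiv:0712.1014 — 4 statements merged into one kernel-verified Lean document; each statement's English description precedes it below -/
import Mathlib

section
/- For every finite simple graph G, the equality λ(G) = β(G) + β₁(G) holds if and only if α(G) = β(G). -/
/-!
For a fixed matching `H`, the largest matching disjoint from `H` has size `β(G \ H)`. Hence
`β(G) + β₁(G)` is the maximum of `|H| + |H'|` over the pairs of disjoint matchings in which `H` is
a maximum matching. Both `λ(G) = β(G) + β₁(G)` and `α(G) = β(G)` therefore say that some pair
attaining `λ(G)` contains a maximum matching.
-/

open SimpleGraph

/-- A matching of `G`, given as a finite set of edges of `G` that are pairwise non-adjacent. -/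
def IsMatchingE {V : Type*} (G : SimpleGraph V) (M : Finset (Sym2 V)) : Prop :=
  ↑M ⊆ G.edgeSet ∧ ∀ e ∈ M, ∀ f ∈ M, e ≠ f → ∀ v : V, ¬(v ∈ e ∧ v ∈ f)

/-- A vertex is covered by a set of edges if some edge of it is incident to the vertex. -/
def Covers {V : Type*} (M : Finset (Sym2 V)) (v : V) : Prop := ∃ e ∈ M, v ∈ e

/-- `β(G)`: the maximum size of a matching of `G`. -/
noncomputable def gBeta {V : Type*} (G : SimpleGraph V) : ℕ :=
  sSup {n | ∃ M : Finset (Sym2 V), IsMatchingE G M ∧ M.card = n}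

/-- `λ(G)`: the maximum of `|H| + |H'|` over pairs `(H, H')` of disjoint matchings of `G`. -/
noncomputable def gLam {V : Type*} (G : SimpleGraph V) : ℕ :=
  sSup {n | ∃ H H' : Finset (Sym2 V), IsMatchingE G H ∧ IsMatchingE G H' ∧
    Disjoint H H' ∧ H.card + H'.card = n}

/-- `α(G)`: the maximum of `|H|` over pairs `(H, H')` of disjoint matchings of `G`
with `|H| + |H'| = λ(G)`. -/
noncomputable def gAlpha {V : Type*} (G : SimpleGraph V) : ℕ :=
  sSup {n | ∃ H H' : Finset (Sym2 V), IsMatchingE G H ∧ IsMatchingE G H' ∧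
    Disjoint H H' ∧ H.card + H'.card = gLam G ∧ H.card = n}

/-- `β₁(G)`: the maximum of `β(G \ F)` over maximum matchings `F` of `G`. -/
noncomputable def gBeta1 {V : Type*} (G : SimpleGraph V) : ℕ :=
  sSup {n | ∃ F : Finset (Sym2 V), IsMatchingE G F ∧ F.card = gBeta G ∧
    gBeta (G.deleteEdges ↑F) = n}

/-- Membership in `M₂(G)`: `(H, H')` is a pair of disjoint matchings of `G` with
`|H| + |H'| = λ(G)` and `|H| = α(G)`. -/
def InM2 {V : Type*} (G : SimpleGraph V) (H H' : Finset (Sym2 V)) : Prop :=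
  IsMatchingE G H ∧ IsMatchingE G H' ∧ Disjoint H H' ∧
  H.card + H'.card = gLam G ∧ H.card = gAlpha G

/-- Membership in `M₂(G, M)`: pairs from `M₂(G)` maximizing `|M ∩ (H ∪ H')|`. -/
def InM2M {V : Type*} [DecidableEq V] (G : SimpleGraph V) (M H H' : Finset (Sym2 V)) : Prop :=
  InM2 G H H' ∧ ∀ K K' : Finset (Sym2 V), InM2 G K K' →
    (M ∩ (K ∪ K')).card ≤ (M ∩ (H ∪ H')).card

/-- The degree of a vertex `v` in the graph `F`. -/
noncomputable def fdeg {V : Type*} (F : SimpleGraph V) (v : V) : ℕ := (F.neighborSet v).ncard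

/-- The spanner: two paths `a₁a₂a₃a₄a₅` and `b₁b₂b₃b₄b₅` joined by the edge `a₃b₃`.
Vertices `0..4` are `a₁..a₅` and `5..9` are `b₁..b₅`. -/
def Spanner10 : SimpleGraph (Fin 10) :=
  SimpleGraph.fromEdgeSet
    {s(0, 1), s(1, 2), s(2, 3), s(3, 4), s(5, 6), s(6, 7), s(7, 8), s(8, 9), s(2, 7)}

/-- An S-forest: every connected component is isomorphic to the spanner. -/
def IsSForest {V : Type*} (F : SimpleGraph V) : Prop :=
  ∀ c : F.ConnectedComponent, Nonempty ((F.induce c.supp) ≃g Spanner10)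

/-- `U(F)`: edges of `F` incident to a vertex of degree 1. -/
def USet {V : Type*} (F : SimpleGraph V) : Set (Sym2 V) :=
  {e | e ∈ F.edgeSet ∧ ∃ v ∈ e, fdeg F v = 1}

/-- `L(F)`: edges of `F` not in `U(F)` incident to a vertex of degree 2. -/
def LSet {V : Type*} (F : SimpleGraph V) : Set (Sym2 V) :=
  {e | e ∈ F.edgeSet ∧ e ∉ USet F ∧ ∃ v ∈ e, fdeg F v = 2}

/-- `w` is the base of the 1-vertex `u` of `F`: a 3-vertex at `F`-distance 2 from `u`. -/
def IsBase {V : Type*} (F : SimpleGraph V) (u w : V) : Prop :=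
  fdeg F w = 3 ∧ F.dist u w = 2

/-- `Δ(G, F)`: edges of `G` joining a 1-vertex of `F` to its base. -/
def DeltaSet {V : Type*} (G F : SimpleGraph V) : Set (Sym2 V) :=
  {e | e ∈ G.edgeSet ∧ ∃ u w : V, e = s(u, w) ∧ fdeg F u = 1 ∧ IsBase F u w}

/-- `B(G, F) = E(G) \ (U(F) ∪ L(F) ∪ Δ(G, F))`. -/
def BSet {V : Type*} (G F : SimpleGraph V) : Set (Sym2 V) :=
  G.edgeSet \ (USet F ∪ LSet F ∪ DeltaSet G F)

/-- Condition (a): no 1-vertex of `F` is incident to an edge from `B(G, F)`. -/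
def CondA {V : Type*} (G F : SimpleGraph V) : Prop :=
  ∀ v : V, fdeg F v = 1 → ∀ e ∈ BSet G F, v ∉ e

/-- Condition (b): if a 1-vertex `u` of `F` is incident to an edge from `Δ(G, F)`, then
the 2-vertex of `F` adjacent to `u` in `F` is not incident to any edge from `B(G, F)`. -/
def CondB {V : Type*} (G F : SimpleGraph V) : Prop :=
  ∀ u v : V, fdeg F u = 1 → (∃ e ∈ DeltaSet G F, u ∈ e) →
    F.Adj u v → fdeg F v = 2 → ∀ e ∈ BSet G F, v ∉ e

/-- Condition (c): for every `L(F)`-`B(G, F)` alternating even closed trail of `G`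
containing an edge joining two 2-vertices of `F`, the graph formed by its edges belonging
to `B(G, F)` is not bipartite (2-colorable). -/
def CondC {V : Type*} (G F : SimpleGraph V) : Prop :=
  ∀ (n : ℕ) (e : ℕ → Sym2 V),
    1 ≤ n →
    (∀ i j, i < 2 * n → j < 2 * n → e i = e j → i = j) →
    (∀ i, i < 2 * n → e i ∈ G.edgeSet) →
    (∀ i, i + 1 < 2 * n → ∃ v : V, v ∈ e i ∧ v ∈ e (i + 1)) →
    (∃ v : V, v ∈ e (2 * n - 1) ∧ v ∈ e 0) →
    (∀ i, i < 2 * n → (i % 2 = 0 → e i ∈ LSet F) ∧ (i % 2 = 1 → e i ∈ BSet G F)) →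
    (∃ i, i < 2 * n ∧ ∀ v ∈ e i, fdeg F v = 2) →
    ¬ (SimpleGraph.fromEdgeSet {f | ∃ i, i < 2 * n ∧ f = e i ∧ f ∈ BSet G F}).Colorable 2

section MatchingParameters

variable {V : Type*} {G : SimpleGraph V}

theorem isMatchingE_empty (G : SimpleGraph V) : IsMatchingE G ∅ := by
  simp [IsMatchingE]

theorem isMatchingE_deleteEdges_iff {F M : Finset (Sym2 V)} :
    IsMatchingE (G.deleteEdges ↑F) M ↔ IsMatchingE G M ∧ Disjoint F M := by
  unfold IsMatchingE
  rw [edgeSet_deleteEdges, Set.subset_sdiff, Finset.disjoint_coe, disjoint_comm,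
    and_right_comm]

/-- The matching number of `G` is finite, i.e. the matchings of `G` have bounded size. This is what
makes the suprema `gBeta`, `gLam`, `gAlpha`, `gBeta1` attained: on an unbounded set of natural
numbers `sSup` is `0`. It holds for every finite graph, but also, for instance, for infinite
stars. -/
def HasFiniteMatchingNumber (G : SimpleGraph V) : Prop :=
  ∃ k, ∀ M : Finset (Sym2 V), IsMatchingE G M → M.card ≤ k

namespace HasFiniteMatchingNumber

theorem of_finite_edgeSet (hG : G.edgeSet.Finite) : HasFiniteMatchingNumber G := by
  refine ⟨G.edgeSet.ncard, fun M hM => ?_⟩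
  rw [← Set.ncard_coe_finset]
  exact Set.ncard_le_ncard hM.1 hG

theorem deleteEdges (hG : HasFiniteMatchingNumber G) (F : Finset (Sym2 V)) :
    HasFiniteMatchingNumber (G.deleteEdges ↑F) :=
  hG.imp fun _ hk M hM => hk M (isMatchingE_deleteEdges_iff.1 hM).1

theorem isGreatest_gBeta (hG : HasFiniteMatchingNumber G) :
    IsGreatest {n | ∃ M : Finset (Sym2 V), IsMatchingE G M ∧ M.card = n} (gBeta G) := by
  obtain ⟨k, hk⟩ := hG
  refine (isClosed_discrete _).isGreatest_csSup ⟨0, ∅, isMatchingE_empty G, rfl⟩ ⟨k, ?_⟩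
  rintro _ ⟨M, hM, rfl⟩
  exact hk M hM

theorem card_le_gBeta (hG : HasFiniteMatchingNumber G) {M : Finset (Sym2 V)}
    (hM : IsMatchingE G M) : M.card ≤ gBeta G :=
  hG.isGreatest_gBeta.2 ⟨M, hM, rfl⟩

theorem gBeta_deleteEdges_le (hG : HasFiniteMatchingNumber G) (F : Finset (Sym2 V)) :
    gBeta (G.deleteEdges ↑F) ≤ gBeta G := by
  obtain ⟨M, hM, hcard⟩ := (hG.deleteEdges F).isGreatest_gBeta.1
  exact hcard ▸ hG.card_le_gBeta (isMatchingE_deleteEdges_iff.1 hM).1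

theorem isGreatest_gLam (hG : HasFiniteMatchingNumber G) :
    IsGreatest {n | ∃ H H' : Finset (Sym2 V), IsMatchingE G H ∧ IsMatchingE G H' ∧
      Disjoint H H' ∧ H.card + H'.card = n} (gLam G) := by
  refine (isClosed_discrete _).isGreatest_csSup
    ⟨0, ∅, ∅, isMatchingE_empty G, isMatchingE_empty G, Finset.disjoint_empty_left ∅, rfl⟩
    ⟨gBeta G + gBeta G, ?_⟩
  rintro _ ⟨H, H', hH, hH', -, rfl⟩
  exact add_le_add (hG.card_le_gBeta hH) (hG.card_le_gBeta hH')

theorem isGreatest_gAlpha (hG : HasFiniteMatchingNumber G) :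
    IsGreatest {n | ∃ H H' : Finset (Sym2 V), IsMatchingE G H ∧ IsMatchingE G H' ∧
      Disjoint H H' ∧ H.card + H'.card = gLam G ∧ H.card = n} (gAlpha G) := by
  obtain ⟨H, H', hH, hH', hdisj, hsum⟩ := hG.isGreatest_gLam.1
  refine (isClosed_discrete _).isGreatest_csSup ⟨_, H, H', hH, hH', hdisj, hsum, rfl⟩
    ⟨gBeta G, ?_⟩
  rintro _ ⟨K, _, hK, -, -, -, rfl⟩
  exact hG.card_le_gBeta hK

theorem isGreatest_gBeta1 (hG : HasFiniteMatchingNumber G) :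
    IsGreatest {n | ∃ F : Finset (Sym2 V), IsMatchingE G F ∧ F.card = gBeta G ∧
      gBeta (G.deleteEdges ↑F) = n} (gBeta1 G) := by
  obtain ⟨F, hF, hcard⟩ := hG.isGreatest_gBeta.1
  refine (isClosed_discrete _).isGreatest_csSup ⟨_, F, hF, hcard, rfl⟩ ⟨gBeta G, ?_⟩
  rintro _ ⟨F, -, -, rfl⟩
  exact hG.gBeta_deleteEdges_le F

theorem isGreatest_gBeta_add_gBeta1 (hG : HasFiniteMatchingNumber G) :
    IsGreatest {n | ∃ H H' : Finset (Sym2 V), IsMatchingE G H ∧ IsMatchingE G H' ∧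
      Disjoint H H' ∧ H.card + H'.card = n ∧ H.card = gBeta G} (gBeta G + gBeta1 G) := by
  constructor
  · obtain ⟨F, hF, hFcard, hFβ₁⟩ := hG.isGreatest_gBeta1.1
    obtain ⟨M, hM, hMcard⟩ := (hG.deleteEdges F).isGreatest_gBeta.1
    obtain ⟨hM, hdisj⟩ := isMatchingE_deleteEdges_iff.1 hM
    exact ⟨F, M, hF, hM, hdisj, by rw [hFcard, hMcard, hFβ₁], hFcard⟩
  · rintro _ ⟨H, H', hH, hH', hdisj, rfl, hcard⟩
    have hH'_le : H'.card ≤ gBeta (G.deleteEdges ↑H) :=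
      (hG.deleteEdges H).card_le_gBeta (isMatchingE_deleteEdges_iff.2 ⟨hH', hdisj⟩)
    have hβ₁ : gBeta (G.deleteEdges ↑H) ≤ gBeta1 G :=
      hG.isGreatest_gBeta1.2 ⟨H, hH, hcard, rfl⟩
    exact add_le_add hcard.le (hH'_le.trans hβ₁)

theorem gLam_eq_gBeta_add_gBeta1_iff (hG : HasFiniteMatchingNumber G) :
    gLam G = gBeta G + gBeta1 G ↔
      ∃ H H' : Finset (Sym2 V), IsMatchingE G H ∧ IsMatchingE G H' ∧
        Disjoint H H' ∧ H.card + H'.card = gLam G ∧ H.card = gBeta G := by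
  have hmax := hG.isGreatest_gBeta_add_gBeta1
  refine ⟨fun h => h ▸ hmax.1, fun h => le_antisymm (hmax.2 h) ?_⟩
  obtain ⟨H, H', hH, hH', hdisj, hsum, -⟩ := hmax.1
  exact hG.isGreatest_gLam.2 ⟨H, H', hH, hH', hdisj, hsum⟩

theorem gAlpha_eq_gBeta_iff (hG : HasFiniteMatchingNumber G) :
    gAlpha G = gBeta G ↔
      ∃ H H' : Finset (Sym2 V), IsMatchingE G H ∧ IsMatchingE G H' ∧
        Disjoint H H' ∧ H.card + H'.card = gLam G ∧ H.card = gBeta G := by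
  have hmax := hG.isGreatest_gAlpha
  refine ⟨fun h => h ▸ hmax.1, fun h => le_antisymm ?_ (hmax.2 h)⟩
  obtain ⟨H, _, hH, -, -, -, hcard⟩ := hmax.1
  exact hcard ▸ hG.card_le_gBeta hH

end HasFiniteMatchingNumber

theorem stmt1_general (hG : HasFiniteMatchingNumber G) :
    gLam G = gBeta G + gBeta1 G ↔ gAlpha G = gBeta G :=
  hG.gLam_eq_gBeta_add_gBeta1_iff.trans hG.gAlpha_eq_gBeta_iff.symm

end MatchingParameters

/-- `λ(G) = β(G) + β₁(G)` if and only if `α(G) = β(G)`. -/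
theorem stmt1 {V : Type*} [Fintype V] [DecidableEq V] (G : SimpleGraph V) :
    gLam G = gBeta G + gBeta1 G ↔ gAlpha G = gBeta G :=
  stmt1_general (.of_finite_edgeSet G.edgeSet.toFinite)
end

section
/- Let G be a finite simple graph and (H, H') ∈ M₂(G). Then there is no path v₀, e₁, v₁, …, e₂ₖ₊₁, v₂ₖ₊₁ in G (k ≥ 0, all vertices distinct) such that the edges with odd index e₁, e₃, …, e₂ₖ₊₁ belong to H', the edges with even index belong to H, and neither of the end-vertices v₀ and v₂ₖ₊₁ is covered by H. (In other words, there is no maximal H-H' alternating path of odd length whose first and last edges are from H'.) -/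
open SimpleGraph

/-!
Let `A ⊆ H'` and `B ⊆ H` be the edges of odd and of even index of such a path, so that
`#A = #B + 1`. Trading them along the path turns `(H, H')` into `((H \ B) ∪ A, (H' \ A) ∪ B)`.
The only vertices that `A` covers and `B` does not are the ends of the path, which `H` does not
cover, so this is again a pair of disjoint matchings. It has as many edges in total as `(H, H')`
but one more in its first matching, contradicting `|H| = α(G)`.
-/

section Exchange

variable {V : Type*} {G : SimpleGraph V}

namespace IsMatchingE

variable {M N : Finset (Sym2 V)}

theorem mono (hM : IsMatchingE G M) (hNM : N ⊆ M) : IsMatchingE G N :=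
  ⟨(Finset.coe_subset.2 hNM).trans hM.1, fun e he f hf ↦ hM.2 e (hNM he) f (hNM hf)⟩

theorem eq_of_mem_of_mem (hM : IsMatchingE G M) {e f : Sym2 V} (he : e ∈ M) (hf : f ∈ M) {x : V}
    (hxe : x ∈ e) (hxf : x ∈ f) : e = f :=
  by_contra fun hef ↦ hM.2 e he f hf hef x ⟨hxe, hxf⟩

variable [DecidableEq V]

theorem union (hM : IsMatchingE G M) (hN : IsMatchingE G N)
    (hMN : ∀ x, Covers M x → ¬ Covers N x) : IsMatchingE G (M ∪ N) := by
  refine ⟨by simpa only [Finset.coe_union] using Set.union_subset hM.1 hN.1, ?_⟩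
  rintro e he f hf hef x ⟨hxe, hxf⟩
  rcases Finset.mem_union.1 he with heM | heN <;> rcases Finset.mem_union.1 hf with hfM | hfN
  · exact hM.2 e heM f hfM hef x ⟨hxe, hxf⟩
  · exact hMN x ⟨e, heM, hxe⟩ ⟨f, hfN, hxf⟩
  · exact hMN x ⟨f, hfM, hxf⟩ ⟨e, heN, hxe⟩
  · exact hN.2 e heN f hfN hef x ⟨hxe, hxf⟩

theorem not_covers_of_covers_sdiff (hM : IsMatchingE G M) (hNM : N ⊆ M) {x : V}
    (hx : Covers (M \ N) x) : ¬ Covers N x := by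
  obtain ⟨e, he, hxe⟩ := hx
  obtain ⟨heM, heN⟩ := Finset.mem_sdiff.1 he
  rintro ⟨f, hfN, hxf⟩
  have hef : e = f := hM.eq_of_mem_of_mem heM (hNM hfN) hxe hxf
  exact heN (hef ▸ hfN)

theorem sdiff_union {A B : Finset (Sym2 V)} (hM : IsMatchingE G M) (hA : IsMatchingE G A)
    (hBM : B ⊆ M) (hAB : ∀ x, Covers M x → Covers A x → Covers B x) :
    IsMatchingE G ((M \ B) ∪ A) := by
  refine (hM.mono Finset.sdiff_subset).union hA fun x hx hxA ↦ ?_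
  have hxM : Covers M x := hx.imp fun _ ⟨he, hxe⟩ ↦ ⟨Finset.sdiff_subset he, hxe⟩
  exact hM.not_covers_of_covers_sdiff hBM hx (hAB x hxM hxA)

end IsMatchingE

theorem card_sdiff_union_add_card {α : Type*} [DecidableEq α] {s t u : Finset α}
    (hts : t ⊆ s) (hsu : Disjoint s u) : ((s \ t) ∪ u).card + t.card = s.card + u.card := by
  rw [Finset.card_union_of_disjoint (hsu.mono_left Finset.sdiff_subset), add_right_comm,
    Finset.card_sdiff_add_card_eq_card hts]

theorem disjoint_sdiff_sup_sdiff_sup {α : Type*} [GeneralizedBooleanAlgebra α] {a a' b b' : α}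
    (ha : Disjoint a a') (hb : b ≤ a) (hb' : b' ≤ a') :
    Disjoint ((a \ b) ⊔ b') ((a' \ b') ⊔ b) := by
  simp only [disjoint_sup_left, disjoint_sup_right]
  exact ⟨⟨ha.mono sdiff_le sdiff_le, disjoint_sdiff_self_right⟩,
    disjoint_sdiff_self_left, (ha.mono hb hb').symm⟩

theorem card_le_card_of_exchange {H H' A B : Finset (Sym2 V)}
    (hH : IsMatchingE G H) (hH' : IsMatchingE G H') (hdisj : Disjoint H H')
    (hmax : ∀ K K' : Finset (Sym2 V), IsMatchingE G K → IsMatchingE G K' → Disjoint K K' →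
      K.card + K'.card = H.card + H'.card → K.card ≤ H.card)
    (hA : A ⊆ H') (hB : B ⊆ H)
    (hAB : ∀ x, Covers H x → Covers A x → Covers B x)
    (hBA : ∀ x, Covers H' x → Covers B x → Covers A x) :
    A.card ≤ B.card := by
  classical
  have hcard : ((H \ B) ∪ A).card + B.card = H.card + A.card :=
    card_sdiff_union_add_card hB (hdisj.mono_right hA)
  have hcard' : ((H' \ A) ∪ B).card + A.card = H'.card + B.card :=
    card_sdiff_union_add_card hA (hdisj.mono_left hB).symm
  have hle : ((H \ B) ∪ A).card ≤ H.card :=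
    hmax _ _ (hH.sdiff_union (hH'.mono hA) hB hAB) (hH'.sdiff_union (hH.mono hB) hA hBA)
      (disjoint_sdiff_sup_sdiff_sup hdisj hB hA) (by lia)
  lia

end Exchange

section AlternateEdges

variable {V : Type*} [DecidableEq V]

/-- The edges `v₀v₁, v₂v₃, …, v₂ₙ₋₂v₂ₙ₋₁`: every other edge, starting with the first, of the walk
with vertices `v₀, v₁, …`. The remaining edges are obtained by shifting `v` by one. -/
def alternateEdges (v : ℕ → V) (n : ℕ) : Finset (Sym2 V) :=
  (Finset.range n).image fun j ↦ s(v (2 * j), v (2 * j + 1))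

variable {v : ℕ → V} {n : ℕ}

theorem alternateEdges_subset_iff {M : Finset (Sym2 V)} :
    alternateEdges v n ⊆ M ↔ ∀ j < n, s(v (2 * j), v (2 * j + 1)) ∈ M := by
  simp only [alternateEdges, Finset.image_subset_iff, Finset.mem_range]

theorem covers_alternateEdges_iff {x : V} :
    Covers (alternateEdges v n) x ↔ ∃ i < 2 * n, v i = x := by
  simp only [Covers, alternateEdges, Finset.exists_mem_image, Finset.mem_range, Sym2.mem_iff]
  constructor
  · rintro ⟨j, hj, rfl | rfl⟩
    · exact ⟨2 * j, by lia, rfl⟩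
    · exact ⟨2 * j + 1, by lia, rfl⟩
  · rintro ⟨i, hi, rfl⟩
    obtain ⟨j, rfl | rfl⟩ := i.even_or_odd'
    · exact ⟨j, by lia, .inl rfl⟩
    · exact ⟨j, by lia, .inr rfl⟩

theorem card_alternateEdges (hv : Set.InjOn v (Set.Iio (2 * n))) :
    (alternateEdges v n).card = n := by
  rw [alternateEdges, Finset.card_image_of_injOn, Finset.card_range]
  intro i hi j hj hij
  simp only [Finset.coe_range, Set.mem_Iio] at hi hj
  rcases Sym2.eq_iff.1 hij with ⟨heq, -⟩ | ⟨heq, -⟩ <;>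
  · have := hv (Set.mem_Iio.2 (by lia)) (Set.mem_Iio.2 (by lia)) heq
    lia

end AlternateEdges

theorem InM2.card_le_of_card_add_card_eq {V : Type*} {G : SimpleGraph V}
    {H H' K K' : Finset (Sym2 V)} (h : InM2 G H H')
    (hK : IsMatchingE G K) (hK' : IsMatchingE G K') (hdisj : Disjoint K K')
    (hcard : K.card + K'.card = H.card + H'.card) :
    K.card ≤ H.card := by
  obtain ⟨-, -, -, hlam, halpha⟩ := h
  rw [halpha]
  refine le_csSup ⟨gLam G, ?_⟩ ⟨K, K', hK, hK', hdisj, hcard.trans hlam, rfl⟩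
  rintro _ ⟨L, L', -, -, -, hL, rfl⟩
  exact hL ▸ Nat.le_add_right _ _

theorem stmt4_general {V : Type*} {G : SimpleGraph V} {H H' : Finset (Sym2 V)}
    (hH : IsMatchingE G H) (hH' : IsMatchingE G H') (hdisj : Disjoint H H')
    (hmax : ∀ K K' : Finset (Sym2 V), IsMatchingE G K → IsMatchingE G K' → Disjoint K K' →
      K.card + K'.card = H.card + H'.card → K.card ≤ H.card) :
    ¬ ∃ (k : ℕ) (v : ℕ → V),
      (∀ i j, i ≤ 2 * k + 1 → j ≤ 2 * k + 1 → v i = v j → i = j) ∧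
      (∀ i, i ≤ 2 * k → s(v i, v (i + 1)) ∈ (if i % 2 = 0 then H' else H)) ∧
      ¬ Covers H (v 0) ∧ ¬ Covers H (v (2 * k + 1)) := by
  classical
  rintro ⟨k, v, hinj, hpath, hfirst, hlast⟩
  let A := alternateEdges v (k + 1)
  let B := alternateEdges (fun i ↦ v (i + 1)) k
  have hA : A ⊆ H' := alternateEdges_subset_iff.2 fun j hj ↦ by
    simpa using hpath (2 * j) (by lia)
  have hB : B ⊆ H := alternateEdges_subset_iff.2 fun j hj ↦ by
    simpa [Nat.add_mod] using hpath (2 * j + 1) (by lia)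
  have hAB (x : V) (hxH : Covers H x) (hxA : Covers A x) : Covers B x := by
    obtain ⟨i, hi, rfl⟩ := covers_alternateEdges_iff.1 hxA
    have hi_ne_first : i ≠ 0 := by rintro rfl; exact hfirst hxH
    have hi_ne_last : i ≠ 2 * k + 1 := by rintro rfl; exact hlast hxH
    exact covers_alternateEdges_iff.2 ⟨i - 1, by lia, congrArg v (by lia)⟩
  have hBA (x : V) (_ : Covers H' x) (hxB : Covers B x) : Covers A x := by
    obtain ⟨i, hi, rfl⟩ := covers_alternateEdges_iff.1 hxB
    exact covers_alternateEdges_iff.2 ⟨i + 1, by lia, rfl⟩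
  have hcardA : A.card = k + 1 := card_alternateEdges fun i hi j hj hij ↦
    hinj i j (by grind) (by grind) hij
  have hcardB : B.card = k := card_alternateEdges fun i hi j hj hij ↦
    Nat.succ_injective <| hinj (i + 1) (j + 1) (by grind) (by grind) hij
  have hle := card_le_card_of_exchange hH hH' hdisj hmax hA hB hAB hBA
  lia

/-- if `(H, H') ∈ M₂(G)` then there is no path
`v₀, e₁, v₁, …, e₂ₖ₊₁, v₂ₖ₊₁` whose odd-indexed edges are in `H'`, even-indexed edges
are in `H`, and whose end-vertices are not covered by `H`. -/
theorem stmt4 {V : Type*} [Fintype V] [DecidableEq V] (G : SimpleGraph V)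
    (H H' : Finset (Sym2 V)) (h : InM2 G H H') :
    ¬ ∃ (k : ℕ) (v : ℕ → V),
      (∀ i j, i ≤ 2 * k + 1 → j ≤ 2 * k + 1 → v i = v j → i = j) ∧
      (∀ i, i ≤ 2 * k → s(v i, v (i + 1)) ∈ (if i % 2 = 0 then H' else H)) ∧
      ¬ Covers H (v 0) ∧ ¬ Covers H (v (2 * k + 1)) :=
  stmt4_general h.1 h.2.1 h.2.2.1 fun _ _ ↦ h.card_le_of_card_add_card_eq
end

section
/- Let S be the spanner and v a vertex of S of degree 1. Then there exists a pair (H, H') ∈ M₂(S) such that v is not covered by H, and there exists a pair (H, H') ∈ M₂(S) such that v is not covered by H'. -/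
open SimpleGraph

/-
The edges at a vertex of degree 1 lie in at most one of two disjoint matchings, so a pair
`(H, H') ∈ M₂(G)` with `|H| = |H'|` settles the claim, since `(H', H)` also belongs to `M₂(G)`.
In the spanner, such a pair is obtained by removing `a₃b₃` and colouring both remaining paths
alternately. To see that it lies in `M₂(S)`, let `H`, `H'` be any disjoint matchings. If `a₃b₃`
is in `H ∪ H'`, then `H ∪ H'` misses another edge at `a₃` and another edge at `b₃`, so
`|H| + |H'| ≤ 9 - 2 = 7`; otherwise `{a₂, a₄, b₂, b₄}` covers all edges of `H` and of `H'`,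
so both have at most 4 edges.
-/

section General

variable {V : Type*} {G : SimpleGraph V} {H H' M : Finset (Sym2 V)} {u v : V}

lemma IsMatchingE.eq_of_mem_of_mem_s9 (hM : IsMatchingE G M) {e f : Sym2 V} (he : e ∈ M)
    (hf : f ∈ M) (hve : v ∈ e) (hvf : v ∈ f) : e = f := by
  by_contra hef
  exact hM.2 e he f hf hef v ⟨hve, hvf⟩

lemma IsMatchingE.card_le_card_of_vertexCover (hM : IsMatchingE G M) {C : Finset V}
    (hC : ∀ e ∈ M, ∃ v ∈ C, v ∈ e) : M.card ≤ C.card :=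
  Finset.card_le_card_of_forall_subsingleton (fun e v ↦ v ∈ e) hC
    fun _ _ _ he _ hf ↦ hM.eq_of_mem_of_mem_s9 he.1 hf.1 he.2 hf.2

lemma not_covers_or_not_covers_of_fdeg_eq_one (hv : fdeg G v = 1) (hH : ↑H ⊆ G.edgeSet)
    (hH' : ↑H' ⊆ G.edgeSet) (hdisj : Disjoint H H') : ¬ Covers H v ∨ ¬ Covers H' v := by
  obtain ⟨w, hw⟩ := Set.ncard_eq_one.mp hv
  have edge_unique : ∀ e ∈ G.edgeSet, v ∈ e → e = s(v, w) := by
    rintro e he ⟨x, rfl⟩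
    have hx : x ∈ G.neighborSet v := he
    rw [hw, Set.mem_singleton_iff] at hx
    rw [hx]
  rw [← not_and_or]
  rintro ⟨⟨e, he, hve⟩, f, hf, hvf⟩
  have hef : e = f := (edge_unique e (hH he) hve).trans (edge_unique f (hH' hf) hvf).symm
  exact Finset.disjoint_left.mp hdisj he (hef ▸ hf)

lemma InM2.swap (h : InM2 G H H') (hcard : H.card = H'.card) : InM2 G H' H := by
  obtain ⟨hH, hH', hdisj, hlam, halpha⟩ := h
  exact ⟨hH', hH, hdisj.symm, by rw [add_comm, hlam], by rw [← hcard, halpha]⟩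

lemma InM2.exists_not_covers (h : InM2 G H H') (hcard : H.card = H'.card)
    (hv : fdeg G v = 1) :
    (∃ K K' : Finset (Sym2 V), InM2 G K K' ∧ ¬ Covers K v) ∧
    (∃ K K' : Finset (Sym2 V), InM2 G K K' ∧ ¬ Covers K' v) := by
  have hswap : InM2 G H' H := h.swap hcard
  rcases not_covers_or_not_covers_of_fdeg_eq_one hv h.1.1 h.2.1.1 h.2.2.1 with hvH | hvH'
  · exact ⟨⟨H, H', h, hvH⟩, ⟨H', H, hswap, hvH⟩⟩
  · exact ⟨⟨H', H, hswap, hvH'⟩, ⟨H, H', h, hvH'⟩⟩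

lemma inM2_of_forall_card_le (hH : IsMatchingE G H) (hH' : IsMatchingE G H')
    (hdisj : Disjoint H H')
    (hsum : ∀ K K' : Finset (Sym2 V), IsMatchingE G K → IsMatchingE G K' → Disjoint K K' →
      K.card + K'.card ≤ H.card + H'.card)
    (hfst : ∀ K K' : Finset (Sym2 V), IsMatchingE G K → IsMatchingE G K' → Disjoint K K' →
      K.card + K'.card = H.card + H'.card → K.card ≤ H.card) : InM2 G H H' := by
  have hlam : gLam G = H.card + H'.card := by
    refine IsGreatest.csSup_eq ⟨⟨H, H', hH, hH', hdisj, rfl⟩, ?_⟩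
    rintro _ ⟨K, K', hK, hK', hd, rfl⟩
    exact hsum K K' hK hK' hd
  have halpha : gAlpha G = H.card := by
    refine IsGreatest.csSup_eq ⟨⟨H, H', hH, hH', hdisj, hlam.symm, rfl⟩, ?_⟩
    rintro _ ⟨K, K', hK, hK', hd, hK_lam, rfl⟩
    exact hfst K K' hK hK' hd (hK_lam.trans hlam)
  exact ⟨hH, hH', hdisj, hlam.symm, halpha.symm⟩

variable [DecidableEq V]

lemma IsMatchingE.card_incidenceFinset_inter_le_one [Fintype (G.neighborSet v)]
    (hM : IsMatchingE G M) : (G.incidenceFinset v ∩ M).card ≤ 1 := by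
  refine Finset.card_le_one.mpr fun e he f hf ↦ ?_
  rw [Finset.mem_inter, mem_incidenceFinset] at he hf
  exact hM.eq_of_mem_of_mem_s9 he.2 hf.2 he.1.2 hf.1.2

lemma IsMatchingE.degree_le_card_incidenceFinset_sdiff_add_two [Fintype (G.neighborSet v)]
    (hH : IsMatchingE G H) (hH' : IsMatchingE G H') :
    G.degree v ≤ (G.incidenceFinset v \ (H ∪ H')).card + 2 := by
  have hinter : (G.incidenceFinset v ∩ (H ∪ H')).card ≤ 1 + 1 := by
    rw [Finset.inter_union_distrib_left]
    exact (Finset.card_union_le _ _).trans <| add_le_add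
      hH.card_incidenceFinset_inter_le_one hH'.card_incidenceFinset_inter_le_one
  rw [← card_incidenceFinset_eq_degree,
    ← Finset.card_sdiff_add_card_inter (G.incidenceFinset v) (H ∪ H')]
  exact Nat.add_le_add_left hinter _

lemma IsMatchingE.card_union_add_degree_add_degree_le [Fintype G.edgeSet]
    [Fintype (G.neighborSet u)] [Fintype (G.neighborSet v)]
    (hH : IsMatchingE G H) (hH' : IsMatchingE G H') (huv : s(u, v) ∈ H ∪ H') :
    (H ∪ H').card + G.degree u + G.degree v ≤ G.edgeFinset.card + 4 := by
  have hsub : H ∪ H' ⊆ G.edgeFinset := by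
    rw [← Finset.coe_subset, coe_edgeFinset, Finset.coe_union]
    exact Set.union_subset hH.1 hH'.1
  have huv_ne : u ≠ v := G.ne_of_adj (mem_edgeFinset.mp (hsub huv))
  have hdisj : Disjoint (G.incidenceFinset u \ (H ∪ H')) (G.incidenceFinset v \ (H ∪ H')) := by
    refine Finset.disjoint_left.mpr fun e heu hev ↦ ?_
    rw [Finset.mem_sdiff, mem_incidenceFinset] at heu hev
    have he : e = s(u, v) := (Sym2.mem_and_mem_iff huv_ne).mp ⟨heu.1.2, hev.1.2⟩
    exact heu.2 (he ▸ huv)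
  have hmissing : (G.incidenceFinset u \ (H ∪ H')).card + (G.incidenceFinset v \ (H ∪ H')).card
      ≤ (G.edgeFinset \ (H ∪ H')).card := by
    rw [← Finset.card_union_of_disjoint hdisj]
    exact Finset.card_le_card <| Finset.union_subset
      (Finset.sdiff_subset_sdiff (G.incidenceFinset_subset u) subset_rfl)
      (Finset.sdiff_subset_sdiff (G.incidenceFinset_subset v) subset_rfl)
  have hcard := Finset.card_sdiff_add_card_eq_card hsub
  have hu := hH.degree_le_card_incidenceFinset_sdiff_add_two (v := u) hH'
  have hv := hH.degree_le_card_incidenceFinset_sdiff_add_two (v := v) hH'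
  omega

end General

namespace Spanner10

instance : DecidableRel Spanner10.Adj :=
  inferInstanceAs (DecidableRel (fromEdgeSet _).Adj)

/-- The matching of the edges `aᵢaᵢ₊₁` and `bᵢbᵢ₊₁` with `i` odd, that is
`{a₁a₂, a₃a₄, b₁b₂, b₃b₄}`; with `evenMatching` it forms a pair in `M₂(S)`. -/
def oddMatching : Finset (Sym2 (Fin 10)) := {s(0, 1), s(2, 3), s(5, 6), s(7, 8)}

/-- The matching of the edges `aᵢaᵢ₊₁` and `bᵢbᵢ₊₁` with `i` even, that is
`{a₂a₃, a₄a₅, b₂b₃, b₄b₅}`; with `oddMatching` it forms a pair in `M₂(S)`. -/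
def evenMatching : Finset (Sym2 (Fin 10)) := {s(1, 2), s(3, 4), s(6, 7), s(8, 9)}

lemma isMatchingE_oddMatching : IsMatchingE Spanner10 oddMatching :=
  ⟨show ∀ e ∈ oddMatching, e ∈ Spanner10.edgeSet by decide, by decide +kernel⟩

lemma isMatchingE_evenMatching : IsMatchingE Spanner10 evenMatching :=
  ⟨show ∀ e ∈ evenMatching, e ∈ Spanner10.edgeSet by decide, by decide +kernel⟩

lemma disjoint_oddMatching_evenMatching : Disjoint oddMatching evenMatching :=
  Finset.disjoint_left.mpr (by decide)

variable {M K K' : Finset (Sym2 (Fin 10))}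

lemma card_le_four_of_bridge_notMem (hM : IsMatchingE Spanner10 M) (hbridge : s(2, 7) ∉ M) :
    M.card ≤ 4 := by
  have hcover : ∀ e ∈ Spanner10.edgeSet, e ≠ s(2, 7) →
      ∃ v ∈ ({1, 3, 6, 8} : Finset (Fin 10)), v ∈ e := by decide
  exact hM.card_le_card_of_vertexCover fun e he ↦
    hcover e (hM.1 he) (ne_of_mem_of_not_mem he hbridge)

lemma card_add_card_le_seven_of_bridge_mem (hK : IsMatchingE Spanner10 K)
    (hK' : IsMatchingE Spanner10 K') (hdisj : Disjoint K K') (hbridge : s(2, 7) ∈ K ∪ K') :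
    K.card + K'.card ≤ 7 := by
  have hbound := hK.card_union_add_degree_add_degree_le hK' hbridge
  have hedges : Spanner10.edgeFinset.card = 9 := by decide
  have hdeg_a : Spanner10.degree 2 = 3 := by decide
  have hdeg_b : Spanner10.degree 7 = 3 := by decide
  rw [Finset.card_union_of_disjoint hdisj] at hbound
  omega

lemma card_add_card_le_seven_or_card_le_four (hK : IsMatchingE Spanner10 K)
    (hK' : IsMatchingE Spanner10 K') (hdisj : Disjoint K K') :
    K.card + K'.card ≤ 7 ∨ K.card ≤ 4 ∧ K'.card ≤ 4 := by
  by_cases hbridge : s(2, 7) ∈ K ∪ K'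
  · exact .inl (card_add_card_le_seven_of_bridge_mem hK hK' hdisj hbridge)
  · rw [Finset.notMem_union] at hbridge
    exact .inr ⟨card_le_four_of_bridge_notMem hK hbridge.1,
      card_le_four_of_bridge_notMem hK' hbridge.2⟩

lemma inM2_oddMatching_evenMatching : InM2 Spanner10 oddMatching evenMatching := by
  have hodd : oddMatching.card = 4 := rfl
  have heven : evenMatching.card = 4 := rfl
  refine inM2_of_forall_card_le isMatchingE_oddMatching isMatchingE_evenMatching
    disjoint_oddMatching_evenMatching (fun K K' hK hK' hdisj ↦ ?_) fun K K' hK hK' hdisj _ ↦ ?_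
  all_goals
    have hbound := card_add_card_le_seven_or_card_le_four hK hK' hdisj
    omega

end Spanner10

/-- for every vertex `v` of degree 1 of the spanner `S` there is a pair
`(H, H') ∈ M₂(S)` with `v` not covered by `H`, and a pair with `v` not covered by `H'`. -/
theorem stmt9 (v : Fin 10) (hv : fdeg Spanner10 v = 1) :
    (∃ H H' : Finset (Sym2 (Fin 10)), InM2 Spanner10 H H' ∧ ¬ Covers H v) ∧
    (∃ H H' : Finset (Sym2 (Fin 10)), InM2 Spanner10 H H' ∧ ¬ Covers H' v) :=
  Spanner10.inM2_oddMatching_evenMatching.exists_not_covers rfl hv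
end

section
/- Let F be an S-forest with k connected components. Then λ(F) = 2·α(F) = 8k and β(F) = 5k; in particular β(F)/α(F) = 5/4. -/
open SimpleGraph

/-!
Only the set of size pairs `(|H|, |H'|)` of disjoint matchings matters, and for a graph with
finitely many components it is the Minkowski sum of the corresponding sets of its components. So it
suffices to find linear inequalities valid for the spanner and points at which they are tight, since
both scale with the number of components.

Matchings `H` of the spanner have `|H| ≤ 5`, as `a₂, a₄, b₂, b₄, a₃` cover all edges. Write
`|H| = p + q` and `|H'| = p' + q'`, where `p, p'` count the pendant edges. There are four of these,
so `p + p' ≤ 4`; the other edges all meet `{a₃, b₃}`, so `q, q' ≤ 2`; and counting incidences with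
the six non-leaves, of which a pendant edge contains one and any other edge two, gives `p + 2q ≤ 6`.
Adding up, `|H| + |H'| ≤ 8` and `2|H| + |H'| = (p + p') + (p + 2q) + q' ≤ 12`. Hence
`|H| + |H'| = 8` forces `|H| ≤ 4`, and the pairs `(5, 0)` and `(4, 4)` are attained.
-/

section

open Finset
open scoped Pointwise

theorem card_inter_add_card_inter_le_of_disjoint {α : Type*} [DecidableEq α] {s t : Finset α}
    (h : Disjoint s t) (u : Finset α) : #(s ∩ u) + #(t ∩ u) ≤ #u := by
  rw [← card_union_of_disjoint (h.mono inter_subset_left inter_subset_left)]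
  exact card_le_card (union_subset inter_subset_right inter_subset_right)

variable {V W : Type*} {G : SimpleGraph V} {G' : SimpleGraph W}

theorem IsMatchingE.subset {M N : Finset (Sym2 V)} (hM : IsMatchingE G M) (hN : N ⊆ M) :
    IsMatchingE G N :=
  ⟨(coe_subset.2 hN).trans hM.1, fun e he e' he' ↦ hM.2 e (hN he) e' (hN he')⟩

theorem IsMatchingE.card_le_of_cover {M : Finset (Sym2 V)} (hM : IsMatchingE G M) {S : Finset V}
    (hS : ∀ e ∈ M, ∃ v ∈ S, v ∈ e) : #M ≤ #S :=
  card_le_card_of_forall_subsingleton (fun e v ↦ v ∈ e) hS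
    fun _ _ e he e' he' ↦ by_contra fun hne ↦ hM.2 e he.1 e' he'.1 hne _ ⟨he.2, he'.2⟩

theorem isMatchingE_iff_card_filter_mem_le_one [DecidableEq V] {M : Finset (Sym2 V)} :
    IsMatchingE G M ↔ ↑M ⊆ G.edgeSet ∧ ∀ v, #{e ∈ M | v ∈ e} ≤ 1 := by
  refine and_congr_right fun _ ↦ ?_
  simp only [card_le_one, mem_filter]
  exact ⟨fun h v e he f hf ↦ by_contra fun hne ↦ h e he.1 f hf.1 hne v ⟨he.2, hf.2⟩,
    fun h e he f hf hne v hv ↦ hne (h v e ⟨he, hv.1⟩ f ⟨hf, hv.2⟩)⟩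

theorem IsMatchingE.sum_card_filter_mem_le [DecidableEq V] {M : Finset (Sym2 V)}
    (hM : IsMatchingE G M) (S : Finset V) : ∑ e ∈ M, #{v ∈ S | v ∈ e} ≤ #S :=
  calc
    ∑ e ∈ M, #{v ∈ S | v ∈ e} = ∑ v ∈ S, #{e ∈ M | v ∈ e} :=
      (sum_card_bipartiteAbove_eq_sum_card_bipartiteBelow (fun v e ↦ v ∈ e)).symm
    _ ≤ ∑ _v ∈ S, 1 := sum_le_sum fun v _ ↦ (isMatchingE_iff_card_filter_mem_le_one.1 hM).2 v
    _ = #S := (card_eq_sum_ones S).symm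

theorem isMatchingE_map_iff (f : G ↪g G') {M : Finset (Sym2 V)} :
    IsMatchingE G' (M.map f.toEmbedding.sym2Map) ↔ IsMatchingE G M := by
  refine and_congr ?_ ?_
  · rw [coe_map, Set.image_subset_iff]
    exact forall₂_congr fun _ _ ↦ f.map_mem_edgeSet_iff
  · simp only [forall_mem_map, (Function.Embedding.injective _).ne_iff]
    refine forall₅_congr fun _ _ _ _ _ ↦ ⟨fun h v hv ↦ h (f v)
      ⟨Sym2.mem_map.2 ⟨v, hv.1, rfl⟩, Sym2.mem_map.2 ⟨v, hv.2, rfl⟩⟩, ?_⟩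
    rintro h _ ⟨hv, hv'⟩
    obtain ⟨u, hu, rfl⟩ := Sym2.mem_map.1 hv
    obtain ⟨u', hu', huu'⟩ := Sym2.mem_map.1 hv'
    obtain rfl := f.injective huu'
    exact h u' ⟨hu, hu'⟩

/-- The pairs `(|H|, |H'|)` of sizes of disjoint matchings `H`, `H'` of `G`. They determine `β(G)`,
`λ(G)` and `α(G)`. -/
def matchingPairSizes (G : SimpleGraph V) : Set (ℕ × ℕ) :=
  {p | ∃ H H' : Finset (Sym2 V), IsMatchingE G H ∧ IsMatchingE G H' ∧ Disjoint H H' ∧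
    (#H, #H') = p}

theorem matchingPairSizes_subset_of_embedding (f : G ↪g G') :
    matchingPairSizes G ⊆ matchingPairSizes G' := by
  rintro _ ⟨H, H', hH, hH', hd, rfl⟩
  exact ⟨_, _, (isMatchingE_map_iff f).2 hH, (isMatchingE_map_iff f).2 hH',
    (disjoint_map _).2 hd, by simp only [card_map]⟩

theorem matchingPairSizes_congr (φ : G ≃g G') : matchingPairSizes G = matchingPairSizes G' :=
  (matchingPairSizes_subset_of_embedding φ.toEmbedding).antisymm
    (matchingPairSizes_subset_of_embedding φ.symm.toEmbedding)

theorem gBeta_eq_sSup : gBeta G = sSup (Prod.fst '' matchingPairSizes G) := by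
  refine congrArg sSup (Set.ext fun n ↦ ⟨?_, ?_⟩)
  · rintro ⟨M, hM, rfl⟩
    exact ⟨_, ⟨M, ∅, hM, hM.subset (empty_subset M), disjoint_empty_right M, rfl⟩, rfl⟩
  · rintro ⟨_, ⟨H, -, hH, -, -, rfl⟩, rfl⟩
    exact ⟨H, hH, rfl⟩

theorem gLam_eq_sSup : gLam G = sSup ((fun p ↦ p.1 + p.2) '' matchingPairSizes G) := by
  refine congrArg sSup (Set.ext fun n ↦ ⟨?_, ?_⟩)
  · rintro ⟨H, H', hH, hH', hd, rfl⟩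
    exact ⟨_, ⟨H, H', hH, hH', hd, rfl⟩, rfl⟩
  · rintro ⟨_, ⟨H, H', hH, hH', hd, rfl⟩, rfl⟩
    exact ⟨H, H', hH, hH', hd, rfl⟩

theorem gAlpha_eq_sSup :
    gAlpha G = sSup (Prod.fst '' {p ∈ matchingPairSizes G | p.1 + p.2 = gLam G}) := by
  refine congrArg sSup (Set.ext fun n ↦ ⟨?_, ?_⟩)
  · rintro ⟨H, H', hH, hH', hd, hsum, rfl⟩
    exact ⟨_, ⟨⟨H, H', hH, hH', hd, rfl⟩, hsum⟩, rfl⟩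
  · rintro ⟨_, ⟨⟨H, H', hH, hH', hd, rfl⟩, hsum⟩, rfl⟩
    exact ⟨H, H', hH, hH', hd, hsum, rfl⟩

section Components

theorem connectedComponentMk_eq_of_mem_map {c : G.ConnectedComponent} {e : Sym2 c.supp} {v : V}
    (hv : v ∈ e.map (↑)) : G.connectedComponentMk v = c := by
  obtain ⟨u, -, rfl⟩ := Sym2.mem_map.1 hv
  exact u.2

/-- The inclusion of the unordered pairs of vertices lying in a common component of `G` into all
unordered pairs, which identifies the edges of the components of `G` with the edges of `G`. -/
def componentSym2 (G : SimpleGraph V) : (Σ c : G.ConnectedComponent, Sym2 c.supp) ↪ Sym2 V where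
  toFun x := x.2.map (↑)
  inj' := by
    rintro ⟨c, e⟩ ⟨d, e'⟩ h
    change e.map Subtype.val = e'.map Subtype.val at h
    obtain ⟨v, hv⟩ : ∃ v, v ∈ e.map ((↑) : c.supp → V) := ⟨_, Sym2.out_fst_mem _⟩
    obtain rfl : c = d := (connectedComponentMk_eq_of_mem_map hv).symm.trans
      (connectedComponentMk_eq_of_mem_map (h ▸ hv))
    exact congrArg _ (Sym2.map.injective Subtype.val_injective h)

theorem edgeSet_subset_range_componentSym2 : G.edgeSet ⊆ Set.range (componentSym2 G) := by
  intro e he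
  induction e using Sym2.ind with | _ v w =>
  have hw : w ∈ (G.connectedComponentMk v).supp :=
    ((G.connectedComponentMk v).mem_supp_congr_adj he).1 rfl
  exact ⟨⟨_, s(⟨v, rfl⟩, ⟨w, hw⟩)⟩, Sym2.map_mk ..⟩

variable [Fintype G.ConnectedComponent]

theorem isMatchingE_map_componentSym2_iff
    {M : ∀ c : G.ConnectedComponent, Finset (Sym2 c.supp)} :
    IsMatchingE G ((univ.sigma M).map (componentSym2 G)) ↔
      ∀ c, IsMatchingE (G.induce c.supp) (M c) := by
  simp only [← isMatchingE_map_iff (Embedding.induce (G := G) (ConnectedComponent.supp _))]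
  have mem_union {e} : e ∈ (univ.sigma M).map (componentSym2 G) ↔
      ∃ c, e ∈ (M c).map (Embedding.induce (G := G) c.supp).toEmbedding.sym2Map := by
    simp only [mem_map, mem_sigma, mem_univ, true_and, Sigma.exists]
    rfl
  refine ⟨fun h c ↦ h.subset fun e he ↦ mem_union.2 ⟨c, he⟩, fun h ↦ ⟨fun e he ↦ ?_, ?_⟩⟩
  · obtain ⟨c, he⟩ := mem_union.1 (mem_coe.1 he)
    exact (h c).1 he
  · intro e he e' he' hne v hv
    obtain ⟨c, he⟩ := mem_union.1 he
    obtain ⟨d, he'⟩ := mem_union.1 he'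
    obtain rfl : c = d := by
      obtain ⟨_, -, rfl⟩ := mem_map.1 he
      obtain ⟨_, -, rfl⟩ := mem_map.1 he'
      exact (connectedComponentMk_eq_of_mem_map hv.1).symm.trans
        (connectedComponentMk_eq_of_mem_map hv.2)
    exact (h c).2 e he e' he' hne v hv

theorem IsMatchingE.exists_map_componentSym2_eq {M : Finset (Sym2 V)} (hM : IsMatchingE G M) :
    ∃ N : ∀ c : G.ConnectedComponent, Finset (Sym2 c.supp),
      (univ.sigma N).map (componentSym2 G) = M := by
  refine ⟨fun c ↦ M.preimage (fun e ↦ componentSym2 G ⟨c, e⟩)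
    ((componentSym2 G).injective.comp sigma_mk_injective).injOn, ?_⟩
  ext e
  simp only [mem_map, mem_sigma, mem_univ, true_and, mem_preimage]
  constructor
  · rintro ⟨x, hx, rfl⟩
    exact hx
  · intro he
    obtain ⟨x, rfl⟩ := edgeSet_subset_range_componentSym2 (hM.1 he)
    exact ⟨x, he, rfl⟩

theorem disjoint_map_componentSym2_iff
    {M N : ∀ c : G.ConnectedComponent, Finset (Sym2 c.supp)} :
    Disjoint ((univ.sigma M).map (componentSym2 G)) ((univ.sigma N).map (componentSym2 G)) ↔
      ∀ c, Disjoint (M c) (N c) := by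
  rw [disjoint_map]
  simp only [Finset.disjoint_left, mem_sigma, mem_univ, true_and, Sigma.forall]

theorem matchingPairSizes_eq_sum_components :
    matchingPairSizes G = ∑ c : G.ConnectedComponent, matchingPairSizes (G.induce c.supp) := by
  ext p
  rw [Set.mem_fintype_sum]
  constructor
  · rintro ⟨H, H', hH, hH', hd, rfl⟩
    obtain ⟨M, rfl⟩ := hH.exists_map_componentSym2_eq
    obtain ⟨M', rfl⟩ := hH'.exists_map_componentSym2_eq
    rw [isMatchingE_map_componentSym2_iff] at hH hH'
    rw [disjoint_map_componentSym2_iff] at hd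
    refine ⟨fun c ↦ (#(M c), #(M' c)), fun c ↦ ⟨M c, M' c, hH c, hH' c, hd c, rfl⟩, ?_⟩
    simp only [card_map, card_sigma, prod_mk_sum]
  · rintro ⟨p, hp, rfl⟩
    choose M M' hM hM' hd hcard using hp
    refine ⟨_, _, isMatchingE_map_componentSym2_iff.2 hM, isMatchingE_map_componentSym2_iff.2 hM',
      disjoint_map_componentSym2_iff.2 hd, ?_⟩
    simp only [card_map, card_sigma, ← hcard, prod_mk_sum]

end Components

section Spanner

/-- The edge set of the spanner as a finset, on which statements can be checked by evaluation. -/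
def spannerEdges : Finset (Sym2 (Fin 10)) :=
  {s(0, 1), s(1, 2), s(2, 3), s(3, 4), s(5, 6), s(6, 7), s(7, 8), s(8, 9), s(2, 7)}

/-- The pendant edges `a₁a₂`, `a₄a₅`, `b₁b₂`, `b₄b₅` of the spanner. -/
def spannerPendantEdges : Finset (Sym2 (Fin 10)) := {s(0, 1), s(3, 4), s(5, 6), s(8, 9)}

theorem coe_spannerEdges : (spannerEdges : Set (Sym2 (Fin 10))) = Spanner10.edgeSet := by
  have not_isDiag : ∀ e ∈ spannerEdges, ¬e.IsDiag := by decide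
  ext e
  simpa [Spanner10, spannerEdges] using not_isDiag e

variable {M : Finset (Sym2 (Fin 10))}

theorem isMatchingE_spanner10_iff : IsMatchingE Spanner10 M ↔
    M ⊆ spannerEdges ∧ ∀ v, #{e ∈ M | v ∈ e} ≤ 1 := by
  rw [isMatchingE_iff_card_filter_mem_le_one, ← coe_spannerEdges, coe_subset]

theorem IsMatchingE.subset_spannerEdges (hM : IsMatchingE Spanner10 M) : M ⊆ spannerEdges :=
  (isMatchingE_spanner10_iff.1 hM).1

theorem IsMatchingE.spanner10_card_le (hM : IsMatchingE Spanner10 M) : #M ≤ 5 :=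
  hM.card_le_of_cover (S := {1, 2, 3, 6, 8}) fun e he ↦
    (by decide : ∀ e ∈ spannerEdges, ∃ v ∈ ({1, 2, 3, 6, 8} : Finset (Fin 10)), v ∈ e) e
      (hM.subset_spannerEdges he)

theorem IsMatchingE.spanner10_card_sdiff_pendant_le (hM : IsMatchingE Spanner10 M) :
    #(M \ spannerPendantEdges) ≤ 2 :=
  (hM.subset sdiff_subset).card_le_of_cover (S := {2, 7}) fun e he ↦
    (by decide : ∀ e ∈ spannerEdges \ spannerPendantEdges,
      ∃ v ∈ ({2, 7} : Finset (Fin 10)), v ∈ e) e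
      (sdiff_subset_sdiff hM.subset_spannerEdges Subset.rfl he)

theorem IsMatchingE.spanner10_card_inter_pendant_add_two_mul_card_sdiff_pendant_le
    (hM : IsMatchingE Spanner10 M) :
    #(M ∩ spannerPendantEdges) + 2 * #(M \ spannerPendantEdges) ≤ 6 := by
  set S : Finset (Fin 10) := {1, 2, 3, 6, 7, 8}
  have one_le : ∀ e ∈ spannerPendantEdges, 1 ≤ #{v ∈ S | v ∈ e} := by decide
  have two_le : ∀ e ∈ spannerEdges \ spannerPendantEdges, 2 ≤ #{v ∈ S | v ∈ e} := by decide
  calc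
    #(M ∩ spannerPendantEdges) + 2 * #(M \ spannerPendantEdges)
      ≤ ∑ e ∈ M ∩ spannerPendantEdges, #{v ∈ S | v ∈ e} +
          ∑ e ∈ M \ spannerPendantEdges, #{v ∈ S | v ∈ e} := by
        refine add_le_add ?_ ?_
        · simpa using card_nsmul_le_sum _ _ 1 fun e he ↦ one_le e (inter_subset_right he)
        · simpa [mul_comm] using card_nsmul_le_sum _ _ 2 fun e he ↦
            two_le e (sdiff_subset_sdiff hM.subset_spannerEdges Subset.rfl he)
    _ = ∑ e ∈ M, #{v ∈ S | v ∈ e} := sum_inter_add_sum_sdiff ..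
    _ ≤ #S := hM.sum_card_filter_mem_le S

theorem le_of_mem_matchingPairSizes_spanner10 {p : ℕ × ℕ} (hp : p ∈ matchingPairSizes Spanner10) :
    p.1 ≤ 5 ∧ p.1 + p.2 ≤ 8 ∧ 2 * p.1 + p.2 ≤ 12 := by
  obtain ⟨H, H', hH, hH', hd, rfl⟩ := hp
  have hsplit := card_inter_add_card_sdiff H spannerPendantEdges
  have hsplit' := card_inter_add_card_sdiff H' spannerPendantEdges
  have hpendant : #(H ∩ spannerPendantEdges) + #(H' ∩ spannerPendantEdges) ≤ 4 :=
    card_inter_add_card_inter_le_of_disjoint hd _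
  have hcard := hH.spanner10_card_le
  have hinner := hH.spanner10_card_sdiff_pendant_le
  have hinner' := hH'.spanner10_card_sdiff_pendant_le
  have hcovered := hH.spanner10_card_inter_pendant_add_two_mul_card_sdiff_pendant_le
  dsimp only
  omega

theorem five_zero_mem_matchingPairSizes_spanner10 : (5, 0) ∈ matchingPairSizes Spanner10 :=
  ⟨{s(0, 1), s(3, 4), s(5, 6), s(8, 9), s(2, 7)}, ∅, isMatchingE_spanner10_iff.2 (by decide),
    isMatchingE_spanner10_iff.2 (by decide), by decide, rfl⟩

theorem four_four_mem_matchingPairSizes_spanner10 : (4, 4) ∈ matchingPairSizes Spanner10 :=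
  ⟨{s(0, 1), s(2, 3), s(5, 6), s(7, 8)}, {s(1, 2), s(3, 4), s(6, 7), s(8, 9)},
    isMatchingE_spanner10_iff.2 (by decide), isMatchingE_spanner10_iff.2 (by decide),
    by decide, rfl⟩

end Spanner

namespace IsSForest

variable [Fintype G.ConnectedComponent] {p : ℕ × ℕ}

theorem matchingPairSizes_eq_sum (hG : IsSForest G) :
    matchingPairSizes G = ∑ _c : G.ConnectedComponent, matchingPairSizes Spanner10 :=
  matchingPairSizes_eq_sum_components.trans
    (sum_congr rfl fun c _ ↦ matchingPairSizes_congr (hG c).some)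

theorem card_smul_mem_matchingPairSizes (hG : IsSForest G)
    (hp : p ∈ matchingPairSizes Spanner10) :
    Fintype.card G.ConnectedComponent • p ∈ matchingPairSizes G := by
  rw [hG.matchingPairSizes_eq_sum, ← Finset.card_univ, ← sum_const]
  exact Set.finsetSum_mem_finsetSum _ _ _ fun _ _ ↦ hp

theorem le_of_mem_matchingPairSizes (hG : IsSForest G) (hp : p ∈ matchingPairSizes G) :
    p.1 ≤ Fintype.card G.ConnectedComponent * 5 ∧
      p.1 + p.2 ≤ Fintype.card G.ConnectedComponent * 8 ∧
      2 * p.1 + p.2 ≤ Fintype.card G.ConnectedComponent * 12 := by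
  rw [hG.matchingPairSizes_eq_sum, Set.mem_fintype_sum] at hp
  obtain ⟨q, hq, rfl⟩ := hp
  have hle c := le_of_mem_matchingPairSizes_spanner10 (hq c)
  simp only [Prod.fst_sum, Prod.snd_sum, mul_sum, ← sum_add_distrib]
  exact ⟨sum_le_card_nsmul _ _ _ fun c _ ↦ (hle c).1,
    sum_le_card_nsmul _ _ _ fun c _ ↦ (hle c).2.1,
    sum_le_card_nsmul _ _ _ fun c _ ↦ (hle c).2.2⟩

theorem gBeta_eq (hG : IsSForest G) : gBeta G = Fintype.card G.ConnectedComponent * 5 := by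
  rw [gBeta_eq_sSup]
  refine IsGreatest.csSup_eq ⟨⟨_, hG.card_smul_mem_matchingPairSizes
    five_zero_mem_matchingPairSizes_spanner10, rfl⟩, ?_⟩
  rintro _ ⟨p, hp, rfl⟩
  exact (hG.le_of_mem_matchingPairSizes hp).1

theorem gLam_eq (hG : IsSForest G) : gLam G = Fintype.card G.ConnectedComponent * 8 := by
  rw [gLam_eq_sSup]
  refine IsGreatest.csSup_eq ⟨⟨_, hG.card_smul_mem_matchingPairSizes
    four_four_mem_matchingPairSizes_spanner10, (mul_add _ 4 4).symm⟩, ?_⟩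
  rintro _ ⟨p, hp, rfl⟩
  exact (hG.le_of_mem_matchingPairSizes hp).2.1

theorem gAlpha_eq (hG : IsSForest G) : gAlpha G = Fintype.card G.ConnectedComponent * 4 := by
  rw [gAlpha_eq_sSup, hG.gLam_eq]
  refine IsGreatest.csSup_eq ⟨⟨_, ⟨hG.card_smul_mem_matchingPairSizes
    four_four_mem_matchingPairSizes_spanner10, (mul_add _ 4 4).symm⟩, rfl⟩, ?_⟩
  rintro _ ⟨p, ⟨hp, hsum⟩, rfl⟩
  have hle := (hG.le_of_mem_matchingPairSizes hp).2.2
  omega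

end IsSForest

end

/-- for an S-forest `F` with `k` connected components:
`λ(F) = 2α(F) = 8k` and `β(F) = 5k`; in particular `β(F)/α(F) = 5/4`. -/
theorem stmt10 {V : Type*} [Fintype V] [DecidableEq V] (F : SimpleGraph V) (k : ℕ)
    (hF : IsSForest F) (hk : Nat.card F.ConnectedComponent = k) :
    gLam F = 2 * gAlpha F ∧ gLam F = 8 * k ∧ gBeta F = 5 * k ∧
    4 * gBeta F = 5 * gAlpha F := by
  have := Fintype.ofFinite F.ConnectedComponent
  rw [Nat.card_eq_fintype_card] at hk
  have hBeta := hF.gBeta_eq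
  have hLam := hF.gLam_eq
  have hAlpha := hF.gAlpha_eq
  omega
end
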